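/- Let n ≥ 1 and λ ≥ n be real (λ = n + α̂ with α̂ ≥ 0 in the paper). For every C_0 > 8λ there exists C > 0 such that for all x, y ∈ [0,∞)^n and s ∈ (−1,1)^n with q_−(x,y,s) > C_0²/(1 + |x| + |y|)², one has sup_{t ∈ (0,1)} t^{−λ} · exp(−q_−(√(1−t)·x, y, s)/t) ≤ C·H_{λ,0}(x,y,s), where √(1−t)·x = (√(1−t)x_1,…,√(1−t)x_n), so that q_−(√(1−t)x,y,s) = (1−t)|x|² + |y|² − 2√(1−t) Σ_{i=1}^n x_i y_i s_i. -/

import Mathlib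

/-- `q₊(x,y,s) = Σᵢ (xᵢ² + yᵢ² + 2xᵢyᵢsᵢ)`. -/
noncomputable def qPlus (n : ℕ) (x y s : Fin n → ℝ) : ℝ :=
  ∑ i, (x i ^ 2 + y i ^ 2 + 2 * x i * y i * s i)

/-- `q₋(x,y,s) = Σᵢ (xᵢ² + yᵢ² − 2xᵢyᵢsᵢ)`. -/
noncomputable def qMinus (n : ℕ) (x y s : Fin n → ℝ) : ℝ :=
  ∑ i, (x i ^ 2 + y i ^ 2 - 2 * x i * y i * s i)

/-- The global kernel `H_{λ,ε}`: equal to `exp(−(1−ε)|y|²)` when `Σᵢ xᵢyᵢsᵢ ≤ 0`,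
and to `q₊^λ · exp(−((1−ε)/2)(|y|² − |x|² + √(q₊q₋)))` when `Σᵢ xᵢyᵢsᵢ > 0`. -/
noncomputable def Hker (n : ℕ) (lam eps : ℝ) (x y s : Fin n → ℝ) : ℝ :=
  if (∑ i, x i * y i * s i) ≤ 0 then
    Real.exp (-(1 - eps) * ∑ i, y i ^ 2)
  else
    qPlus n x y s ^ lam *
      Real.exp (-((1 - eps) / 2) *
        ((∑ i, y i ^ 2) - (∑ i, x i ^ 2) +
          Real.sqrt (qPlus n x y s * qMinus n x y s)))

/-!
Write `A = |x|²`, `B = |y|²`, `S = ∑ xᵢyᵢsᵢ`, so that `q± = A + B ± 2S`, and `w = √(1-t)`.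
When `S ≤ 0` the cross term only helps, and what remains is `t^(-λ) exp(-(A+B)(1/t-1)) exp(-B)`,
which is controlled as soon as `A + B` is bounded below.
When `S > 0` put `ζ = (1+w)/(1-w) ≥ 1/t`. The exponent becomes `(B-A)/2 + (q₊/ζ + q₋ζ)/4`, whose
minimum over `ζ` is `(B-A)/2 + √(q₊q₋)/2`. The excess over this minimum is
`(√(q₊q₋) z - 1)²/(4z)` with `z = ζ/q₊`; it grows linearly in `z` and so absorbs the factor `z^λ`,
uniformly once `√(q₊q₋)` is bounded below.
The global condition bounds `(A+B) q₋` below. This gives both lower bounds, because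
`q₋ ≤ 2(A+B)` always holds and `A + B ≤ q₊` when `S > 0`.
-/

section RealInequalities

variable {lam a : ℝ}

lemma rpow_mul_exp_neg_mul_le {u : ℝ} (hlam : 0 ≤ lam) (ha : 0 < a) (hu : 0 ≤ u) :
    u ^ lam * Real.exp (-(a * u)) ≤ ((lam + 1) / a) ^ lam := by
  set v := a * u / (lam + 1) with hv
  have hu_eq : u = (lam + 1) / a * v := by rw [hv]; field_simp
  have hv0 : 0 ≤ v := by positivity
  have hv_exp : v ≤ Real.exp v := by linarith [Real.add_one_le_exp v]
  have hexp : v * lam ≤ a * u := by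
    have : v * (lam + 1) = a * u := div_mul_cancel₀ _ (by positivity)
    linarith
  rw [Real.exp_neg, mul_inv_le_iff₀ (Real.exp_pos _)]
  calc u ^ lam = ((lam + 1) / a) ^ lam * v ^ lam := by
        rw [← Real.mul_rpow (by positivity) hv0, ← hu_eq]
    _ ≤ ((lam + 1) / a) ^ lam * Real.exp v ^ lam := by gcongr
    _ = ((lam + 1) / a) ^ lam * Real.exp (v * lam) := by rw [Real.exp_mul]
    _ ≤ ((lam + 1) / a) ^ lam * Real.exp (a * u) := by gcongr

lemma sq_mul_sub_two_mul_le_sq_div {g z : ℝ} (ha : 0 ≤ a) (hag : a ≤ g) (hz : 0 < z) :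
    a ^ 2 * z - 2 * a ≤ (g * z - 1) ^ 2 / z := by
  rw [le_div_iff₀ hz]
  rcases le_total 1 (a * z) with h | h
  · have hsq : (a * z - 1) ^ 2 ≤ (g * z - 1) ^ 2 := by
      have : 0 ≤ a * z - 1 := sub_nonneg.mpr h
      gcongr
    linarith
  · have hneg : a * z * (a * z - 2) ≤ 0 :=
      mul_nonpos_of_nonneg_of_nonpos (by positivity) (by linarith)
    linarith [sq_nonneg (g * z - 1)]

lemma div_add_mul_eq_sqrt_add_sq_div {P M ζ : ℝ} (hP : P ≠ 0) (hPM : 0 ≤ P * M) (hζ : ζ ≠ 0) :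
    P / ζ + M * ζ = 2 * √(P * M) + (√(P * M) * (ζ / P) - 1) ^ 2 / (ζ / P) := by
  have hsq : √(P * M) ^ 2 = P * M := Real.sq_sqrt hPM
  field_simp
  linear_combination (-ζ ^ 2) * hsq

lemma rpow_mul_exp_neg_div_add_mul_le {P M ζ : ℝ} (hlam : 0 ≤ lam) (ha : 0 < a) (hP : 0 < P)
    (haPM : a ≤ √(P * M)) (hζ : 0 < ζ) :
    ζ ^ lam * Real.exp (-((P / ζ + M * ζ) / 4)) ≤
      Real.exp (a / 2) * ((lam + 1) / (a ^ 2 / 4)) ^ lam *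
        (P ^ lam * Real.exp (-(√(P * M) / 2))) := by
  have hPM : 0 < P * M := Real.sqrt_pos.mp (ha.trans_le haPM)
  set z := ζ / P with hz_def
  have hz : 0 < z := by positivity
  have hζz : ζ = z * P := by rw [hz_def]; field_simp
  have hexp : -((P / ζ + M * ζ) / 4) ≤ a / 2 + -(a ^ 2 / 4 * z) + -(√(P * M) / 2) := by
    rw [div_add_mul_eq_sqrt_add_sq_div hP.ne' hPM.le hζ.ne', ← hz_def]
    linarith [sq_mul_sub_two_mul_le_sq_div ha.le haPM hz]
  calc ζ ^ lam * Real.exp (-((P / ζ + M * ζ) / 4))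
      ≤ (z ^ lam * P ^ lam) * Real.exp (a / 2 + -(a ^ 2 / 4 * z) + -(√(P * M) / 2)) := by
        rw [← Real.mul_rpow hz.le hP.le, ← hζz]
        gcongr
    _ = Real.exp (a / 2) * (z ^ lam * Real.exp (-(a ^ 2 / 4 * z))) *
          (P ^ lam * Real.exp (-(√(P * M) / 2))) := by
        rw [Real.exp_add, Real.exp_add]; ring
    _ ≤ _ := by
        gcongr
        exact rpow_mul_exp_neg_mul_le hlam (by positivity) hz.le

end RealInequalities

section HeatExponent

variable {lam a A B S w : ℝ}

lemma heat_exponent_eq (hp : 1 + w ≠ 0) (hm : 1 - w ≠ 0) :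
    (w ^ 2 * A + B - 2 * w * S) / (1 - w ^ 2) =
      (B - A) / 2 + ((A + B + 2 * S) / ((1 + w) / (1 - w)) +
        (A + B - 2 * S) * ((1 + w) / (1 - w))) / 4 := by
  rw [show 1 - w ^ 2 = (1 - w) * (1 + w) by ring]
  field_simp
  ring

lemma one_sub_sq_rpow_neg_le (hlam : 0 ≤ lam) (hw0 : 0 ≤ w) (hw1 : w < 1) :
    (1 - w ^ 2) ^ (-lam) ≤ ((1 + w) / (1 - w)) ^ lam := by
  have hm : 0 < 1 - w := by linarith
  have ht : 0 < 1 - w ^ 2 := by nlinarith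
  have hζ : (1 + w) / (1 - w) = (1 + w) ^ 2 * (1 - w ^ 2)⁻¹ := by
    field_simp
    ring
  rw [Real.rpow_neg ht.le, ← Real.inv_rpow ht.le]
  gcongr
  rw [hζ]
  exact le_mul_of_one_le_left (by positivity) (one_le_pow₀ (by linarith))

lemma heat_kernel_le_of_nonpos (hlam : 0 ≤ lam) (ha : 0 < a) (haAB : a ≤ A + B) (hS : S ≤ 0)
    (hw0 : 0 ≤ w) (hw1 : w < 1) :
    (1 - w ^ 2) ^ (-lam) * Real.exp (-(w ^ 2 * A + B - 2 * w * S) / (1 - w ^ 2)) ≤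
      Real.exp a * ((lam + 1) / a) ^ lam * Real.exp (-B) := by
  have ht : 0 < 1 - w ^ 2 := by nlinarith
  set u := (1 - w ^ 2)⁻¹ with hu
  have hu1 : 1 ≤ u := (one_le_inv₀ ht).mpr (by nlinarith)
  have hcross : 0 ≤ u * (w * -S) := by
    have := neg_nonneg.mpr hS
    positivity
  have hexponent : -(w ^ 2 * A + B - 2 * w * S) / (1 - w ^ 2) =
      -((A + B) * (u - 1)) - B - 2 * (u * (w * -S)) := by
    rw [hu]; field_simp; ring
  have hexp : -(w ^ 2 * A + B - 2 * w * S) / (1 - w ^ 2) ≤ a + -(a * u) + -B := by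
    have := mul_le_mul_of_nonneg_right haAB (sub_nonneg.mpr hu1)
    linarith
  calc (1 - w ^ 2) ^ (-lam) * Real.exp (-(w ^ 2 * A + B - 2 * w * S) / (1 - w ^ 2))
      ≤ u ^ lam * Real.exp (a + -(a * u) + -B) := by
        rw [Real.rpow_neg ht.le, ← Real.inv_rpow ht.le]
        gcongr
    _ = Real.exp a * (u ^ lam * Real.exp (-(a * u))) * Real.exp (-B) := by
        rw [Real.exp_add, Real.exp_add]; ring
    _ ≤ Real.exp a * ((lam + 1) / a) ^ lam * Real.exp (-B) := by
        gcongr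
        exact rpow_mul_exp_neg_mul_le hlam ha (zero_le_one.trans hu1)

lemma heat_kernel_le_of_le_sqrt (hlam : 0 ≤ lam) (ha : 0 < a) (hP : 0 < A + B + 2 * S)
    (haPM : a ≤ √((A + B + 2 * S) * (A + B - 2 * S)))
    (hw0 : 0 ≤ w) (hw1 : w < 1) :
    (1 - w ^ 2) ^ (-lam) * Real.exp (-(w ^ 2 * A + B - 2 * w * S) / (1 - w ^ 2)) ≤
      Real.exp (a / 2) * ((lam + 1) / (a ^ 2 / 4)) ^ lam * ((A + B + 2 * S) ^ lam *
        Real.exp (-(1 / 2) * (B - A + √((A + B + 2 * S) * (A + B - 2 * S))))) := by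
  set P := A + B + 2 * S
  set M := A + B - 2 * S
  set ζ := (1 + w) / (1 - w)
  have hζ : 0 < ζ := div_pos (by linarith) (by linarith)
  calc (1 - w ^ 2) ^ (-lam) * Real.exp (-(w ^ 2 * A + B - 2 * w * S) / (1 - w ^ 2))
      ≤ ζ ^ lam * Real.exp (-((B - A) / 2 + (P / ζ + M * ζ) / 4)) := by
        rw [neg_div, heat_exponent_eq (by linarith) (by linarith)]
        gcongr
        exact one_sub_sq_rpow_neg_le hlam hw0 hw1
    _ = ζ ^ lam * Real.exp (-((P / ζ + M * ζ) / 4)) * Real.exp (-((B - A) / 2)) := by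
        rw [neg_add, Real.exp_add]; ring
    _ ≤ Real.exp (a / 2) * ((lam + 1) / (a ^ 2 / 4)) ^ lam *
          (P ^ lam * Real.exp (-(√(P * M) / 2))) * Real.exp (-((B - A) / 2)) :=
        mul_le_mul_of_nonneg_right
          (rpow_mul_exp_neg_div_add_mul_le hlam ha hP haPM hζ) (Real.exp_pos _).le
    _ = _ := by
        rw [show -(1 / 2) * (B - A + √(P * M)) = -(√(P * M) / 2) + -((B - A) / 2) by ring,
          Real.exp_add]
        ring

lemma two_mul_sq_le_of_global {C₀ M : ℝ} (hC₀ : 0 ≤ C₀) (hA : 0 ≤ A) (hB : 0 ≤ B)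
    (hM : M ≤ 2 * (A + B)) (hglob : C₀ ^ 2 / (1 + √A + √B) ^ 2 ≤ M) :
    2 * min (C₀ / 4) (C₀ ^ 2 / 12) ^ 2 ≤ (A + B) * M := by
  set a := min (C₀ / 4) (C₀ ^ 2 / 12)
  have ha : 0 ≤ a := by positivity
  have hM0 : 0 ≤ M := le_trans (by positivity) hglob
  have hCM : C₀ ^ 2 ≤ M * (3 * (1 + (A + B))) := by
    have hsum : (1 + √A + √B) ^ 2 ≤ 3 * (1 + (A + B)) := by
      nlinarith [sq_nonneg (1 - √A), sq_nonneg (1 - √B), sq_nonneg (√A - √B),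
        Real.sq_sqrt hA, Real.sq_sqrt hB]
    rw [div_le_iff₀ (by positivity)] at hglob
    exact hglob.trans (by gcongr)
  rcases le_total 1 (A + B) with hlarge | hsmall
  · have hsq : a ^ 2 ≤ (C₀ / 4) ^ 2 := by gcongr; exact min_le_left _ _
    have hCM' : C₀ ^ 2 ≤ 6 * ((A + B) * M) := by nlinarith
    linarith [sq_nonneg C₀]
  · have haM : 2 * a ≤ M := by
      have haC : a ≤ C₀ ^ 2 / 12 := min_le_right _ _
      have hCM' : C₀ ^ 2 ≤ 6 * M := by nlinarith
      linarith
    calc 2 * a ^ 2 = a * (2 * a) := by ring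
      _ ≤ (A + B) * M := by gcongr; linarith

end HeatExponent

section QuadraticForms

variable {n : ℕ} {x y s : Fin n → ℝ}

lemma qPlus_eq :
    qPlus n x y s = ∑ i, x i ^ 2 + ∑ i, y i ^ 2 + 2 * ∑ i, x i * y i * s i := by
  simp only [qPlus, Finset.sum_add_distrib, Finset.mul_sum, mul_assoc]

lemma qMinus_eq :
    qMinus n x y s = ∑ i, x i ^ 2 + ∑ i, y i ^ 2 - 2 * ∑ i, x i * y i * s i := by
  simp only [qMinus, Finset.sum_sub_distrib, Finset.sum_add_distrib, Finset.mul_sum, mul_assoc]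

lemma qMinus_mul_left (w : ℝ) :
    qMinus n (fun i => w * x i) y s =
      w ^ 2 * ∑ i, x i ^ 2 + ∑ i, y i ^ 2 - 2 * w * ∑ i, x i * y i * s i := by
  simp only [qMinus_eq, mul_pow, mul_assoc, Finset.mul_sum]

lemma qPlus_nonneg (hs : ∀ i, s i ∈ Set.Icc (-1 : ℝ) 1) : 0 ≤ qPlus n x y s := by
  refine Finset.sum_nonneg fun i _ => ?_
  have hp : 0 ≤ 1 + s i := by linarith [(hs i).1]
  have hm : 0 ≤ 1 - s i := by linarith [(hs i).2]
  calc 0 ≤ (1 + s i) / 2 * (x i + y i) ^ 2 + (1 - s i) / 2 * (x i - y i) ^ 2 := by positivity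
    _ = x i ^ 2 + y i ^ 2 + 2 * x i * y i * s i := by ring

lemma qMinus_le (hs : ∀ i, s i ∈ Set.Icc (-1 : ℝ) 1) :
    qMinus n x y s ≤ 2 * (∑ i, x i ^ 2 + ∑ i, y i ^ 2) := by
  have hP : 0 ≤ qPlus n x y s := qPlus_nonneg hs
  rw [qPlus_eq] at hP
  rw [qMinus_eq]
  linarith

lemma exists_heat_kernel_le_mul_Hker (n : ℕ) {lam a : ℝ} (hlam : 0 ≤ lam) (ha : 0 < a) :
    ∃ C > (0 : ℝ), ∀ x y s : Fin n → ℝ, (∀ i, s i ∈ Set.Icc (-1 : ℝ) 1) →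
      2 * a ^ 2 ≤ (∑ i, x i ^ 2 + ∑ i, y i ^ 2) * qMinus n x y s →
      ∀ w ∈ Set.Ico (0 : ℝ) 1,
        (1 - w ^ 2) ^ (-lam) * Real.exp (-(qMinus n (fun i => w * x i) y s) / (1 - w ^ 2)) ≤
          C * Hker n lam 0 x y s := by
  refine ⟨max (Real.exp a * ((lam + 1) / a) ^ lam)
    (Real.exp (a / 2) * ((lam + 1) / (a ^ 2 / 4)) ^ lam), by positivity, ?_⟩
  rintro x y s hs hglob w ⟨hw0, hw1⟩
  have hP : 0 ≤ qPlus n x y s := qPlus_nonneg hs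
  have hAB : 0 ≤ ∑ i, x i ^ 2 + ∑ i, y i ^ 2 := by positivity
  rw [Hker, qMinus_mul_left]
  rw [qMinus_eq] at hglob ⊢
  rw [qPlus_eq] at hP ⊢
  set A := ∑ i, x i ^ 2
  set B := ∑ i, y i ^ 2
  split_ifs with hS
  · have hsq : a ^ 2 ≤ (A + B) ^ 2 := by nlinarith
    have haAB : a ≤ A + B := (sq_le_sq₀ ha.le hAB).mp hsq
    refine (heat_kernel_le_of_nonpos hlam ha haAB hS hw0 hw1).trans ?_
    rw [sub_zero, neg_one_mul]
    gcongr
    exact le_max_left _ _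
  · rw [not_le] at hS
    have hM : 0 < A + B - 2 * ∑ i, x i * y i * s i :=
      pos_of_mul_pos_right (lt_of_lt_of_le (by positivity) hglob) hAB
    have haPM : a ≤ √((A + B + 2 * ∑ i, x i * y i * s i) *
        (A + B - 2 * ∑ i, x i * y i * s i)) :=
      Real.le_sqrt_of_sq_le (by nlinarith)
    refine (heat_kernel_le_of_le_sqrt hlam ha (by linarith) haPM hw0 hw1).trans ?_
    rw [sub_zero]
    gcongr
    exact le_max_right _ _

end QuadraticForms

theorem heat_global_kernel_estimate_general (n : ℕ) {lam C₀ : ℝ} (hlam : 0 ≤ lam) (hC₀ : 0 < C₀) :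
    ∃ C > (0 : ℝ), ∀ x y s : Fin n → ℝ, (∀ i, s i ∈ Set.Icc (-1 : ℝ) 1) →
      C₀ ^ 2 / (1 + √(∑ i, x i ^ 2) + √(∑ i, y i ^ 2)) ^ 2 ≤ qMinus n x y s →
      ∀ t ∈ Set.Ioc (0 : ℝ) 1,
        t ^ (-lam) * Real.exp (-(qMinus n (fun i => √(1 - t) * x i) y s) / t) ≤
          C * Hker n lam 0 x y s := by
  set a := min (C₀ / 4) (C₀ ^ 2 / 12)
  have ha : 0 < a := by positivity
  obtain ⟨C, hC, hkernel⟩ := exists_heat_kernel_le_mul_Hker n hlam ha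
  refine ⟨C, hC, ?_⟩
  rintro x y s hs hglob t ⟨ht0, ht1⟩
  have hregion : 2 * a ^ 2 ≤ (∑ i, x i ^ 2 + ∑ i, y i ^ 2) * qMinus n x y s :=
    two_mul_sq_le_of_global hC₀.le (by positivity) (by positivity) (qMinus_le hs) hglob
  have hw1 : √(1 - t) < 1 := by rw [Real.sqrt_lt' one_pos]; linarith
  have hbound := hkernel x y s hs hregion _ ⟨Real.sqrt_nonneg _, hw1⟩
  rwa [Real.sq_sqrt (by linarith), sub_sub_cancel] at hbound

/-- **Key pointwise kernel estimate for the global heat maximal operator** (Section 4).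
Let `n ≥ 1`, `λ ≥ n`. For every `C₀ > 8λ` there is `C > 0` such that on the global
region `q₋(x,y,s) > C₀²/(1+|x|+|y|)²` (with `x, y ∈ [0,∞)ⁿ`, `s ∈ (−1,1)ⁿ`), one has
`sup_{t∈(0,1)} t^{−λ} exp(−q₋(√(1−t)x, y, s)/t) ≤ C·H_{λ,0}(x,y,s)`. -/
theorem heat_global_kernel_estimate (n : ℕ) (hn : 1 ≤ n) (lam : ℝ)
    (hlam : (n : ℝ) ≤ lam) (C0 : ℝ) (hC0 : 8 * lam < C0) :
    ∃ C > (0:ℝ), ∀ x y s : Fin n → ℝ,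
      (∀ i, 0 ≤ x i) → (∀ i, 0 ≤ y i) → (∀ i, s i ∈ Set.Ioo (-1 : ℝ) 1) →
      C0 ^ 2 / (1 + Real.sqrt (∑ i, x i ^ 2) + Real.sqrt (∑ i, y i ^ 2)) ^ 2 <
        qMinus n x y s →
      ∀ t ∈ Set.Ioo (0 : ℝ) 1,
        t ^ (-lam) *
          Real.exp (-(qMinus n (fun i => Real.sqrt (1 - t) * x i) y s) / t) ≤
        C * Hker n lam 0 x y s := by
  obtain ⟨C, hC, h⟩ := heat_global_kernel_estimate_general n (n.cast_nonneg.trans hlam)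
    (show 0 < C0 by linarith [(n.cast_nonneg : (0 : ℝ) ≤ n)])
  exact ⟨C, hC, fun x y s _ _ hs hglob t ht =>
    h x y s (fun i => Set.Ioo_subset_Icc_self (hs i)) hglob.le t (Set.Ioo_subset_Ioc_self ht)⟩
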